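/- arXiv:1611.05151 — 2 statements merged into one kernel-verified Lean document; each statement's English description precedes it below -/
import Mathlib

section
/- Let N ≥ 1 and let C = (C_{ijkl}) be a real four-index array on {1, …, N} satisfying the strong convexity condition with constant c₀ > 0: Σ_{i,j,k,l} C_{ijkl} ε_{ij} ε_{kl} ≥ c₀ Σ_{i,j} ε_{ij}² for every real N×N matrix ε. Let M be a real N×N matrix with det M > 0, and suppose there is L > 0 such that Σ_{i,j} ε_{ij}² ≤ L² Σ_{i,j} (εM)_{ij}² for every real N×N matrix ε. Then the push-forward tensor C̃_{iqkp} = (1/det M) Σ_{j,l} C_{ijkl} M_{pl} M_{qj} satisfies the strong convexity condition with the constant c̃₀ = c₀ / (L² det M): Σ_{i,q,k,p} C̃_{iqkp} ε_{iq} ε_{kp} ≥ c̃₀ Σ_{i,q} ε_{iq}² for every real N×N matrix ε. -/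
/-- The push-forward of a four-index tensor `C` by an invertible matrix `M`:
`C̃_{iqkp} = (1/det M) Σ_{j,l} C_{ijkl} M_{pl} M_{qj}`. -/
noncomputable def pushForward {N : ℕ} (C : Fin N → Fin N → Fin N → Fin N → ℝ)
    (M : Matrix (Fin N) (Fin N) ℝ) : Fin N → Fin N → Fin N → Fin N → ℝ :=
  fun i q k p => (1 / M.det) * ∑ j, ∑ l, C i j k l * M p l * M q j

/-!
For fixed `i, k` the array `C` restricts to a matrix `A = (C_{ijkl})_{j,l}`, and up to the factor
`1 / det M` the push-forward replaces `A` by `M A Mᵀ`. Hence its quadratic form at `ε` is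
`1 / det M` times that of `C` at `ε M`, where the convexity of `C` and the lower bound
`‖ε M‖² ≥ L⁻² ‖ε‖²` apply.
-/

/-- Four-index arrays `C_{ijkl}` with first and third indices in `m` and second and fourth indices
in `n`, so that they can be contracted with two `m × n` matrices. -/
abbrev FourTensor (m n R : Type*) := m → n → m → n → R

namespace FourTensor

open scoped Matrix

variable {l m n R : Type*}

/-- The `n × n` matrix `(C_{ijkl})_{j,l}` obtained by fixing the first and third indices. -/
def block (C : FourTensor m n R) (i k : m) : Matrix n n R :=
  Matrix.of fun j l ↦ C i j k l

variable [Fintype n] [CommSemiring R]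

/-- The action of a matrix `M` on the second and fourth indices, by congruence of the blocks. It is
the push-forward by `M` without the factor `1 / det M`, and makes sense for rectangular `M`. -/
def congruence (C : FourTensor m n R) (M : Matrix l n R) : FourTensor m l R :=
  fun i q k p ↦ (M * C.block i k * Mᵀ) q p

variable [Fintype m]

/-- The quadratic form `ε ↦ ∑ C_{ijkl} ε_{ij} ε_{kl}` on `m × n` matrices. -/
def quadForm (C : FourTensor m n R) (ε : Matrix m n R) : R :=
  ∑ i, ∑ j, ∑ k, ∑ l, C i j k l * ε i j * ε k l

theorem quadForm_eq_sum_block (C : FourTensor m n R) (ε : Matrix m n R) :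
    C.quadForm ε = ∑ i, ∑ k, ε i ⬝ᵥ C.block i k *ᵥ ε k := by
  refine Finset.sum_congr rfl fun i _ ↦ ?_
  rw [Finset.sum_comm]
  simp only [dotProduct, Matrix.mulVec, block, Matrix.of_apply, Finset.mul_sum, mul_assoc,
    mul_left_comm]

theorem quadForm_smul (a : R) (C : FourTensor m n R) (ε : Matrix m n R) :
    (a • C).quadForm ε = a * C.quadForm ε := by
  simp only [quadForm, Pi.smul_apply, smul_eq_mul, Finset.mul_sum, mul_assoc]

theorem quadForm_congruence [Fintype l] (C : FourTensor m n R) (M : Matrix l n R)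
    (ε : Matrix m l R) : (C.congruence M).quadForm ε = C.quadForm (ε * M) := by
  simp only [quadForm_eq_sum_block]
  refine Finset.sum_congr rfl fun i _ ↦ Finset.sum_congr rfl fun k _ ↦ ?_
  calc ε i ⬝ᵥ (M * C.block i k * Mᵀ) *ᵥ ε k
      = (ε i ᵥ* M) ⬝ᵥ C.block i k *ᵥ (ε k ᵥ* M) := by
        rw [Matrix.mul_assoc, ← Matrix.mulVec_mulVec, ← Matrix.mulVec_mulVec,
          Matrix.mulVec_transpose, Matrix.dotProduct_mulVec]
    _ = (ε * M) i ⬝ᵥ C.block i k *ᵥ (ε * M) k := by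
        rw [Matrix.mul_apply_eq_vecMul, Matrix.mul_apply_eq_vecMul]

variable [PartialOrder R]

/-- Strong convexity with constant `c`; positivity of `c` is not part of the definition. -/
def IsStronglyConvex (C : FourTensor m n R) (c : R) : Prop :=
  ∀ ε : Matrix m n R, c * ∑ i, ∑ j, ε i j ^ 2 ≤ C.quadForm ε

variable [PosMulMono R]

theorem IsStronglyConvex.smul {C : FourTensor m n R} {a c : R} (hC : C.IsStronglyConvex c)
    (ha : 0 ≤ a) : (a • C).IsStronglyConvex (a * c) := fun ε ↦ by
  rw [quadForm_smul, mul_assoc]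
  exact mul_le_mul_of_nonneg_left (hC ε) ha

theorem IsStronglyConvex.congruence [Fintype l] {C : FourTensor m n R} {c b : R}
    (hC : C.IsStronglyConvex c) (hc : 0 ≤ c) {M : Matrix l n R}
    (hM : ∀ ε : Matrix m l R, b * ∑ i, ∑ q, ε i q ^ 2 ≤ ∑ i, ∑ j, (ε * M) i j ^ 2) :
    (C.congruence M).IsStronglyConvex (c * b) := fun ε ↦
  calc c * b * ∑ i, ∑ q, ε i q ^ 2
      ≤ c * ∑ i, ∑ j, (ε * M) i j ^ 2 := by
        rw [mul_assoc]
        exact mul_le_mul_of_nonneg_left (hM ε) hc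
    _ ≤ C.quadForm (ε * M) := hC (ε * M)
    _ = (C.congruence M).quadForm ε := (quadForm_congruence C M ε).symm

end FourTensor

theorem pushForward_eq_smul_congruence {N : ℕ} (C : FourTensor (Fin N) (Fin N) ℝ)
    (M : Matrix (Fin N) (Fin N) ℝ) : pushForward C M = M.det⁻¹ • C.congruence M := by
  ext i q k p
  simp only [pushForward, one_div, Pi.smul_apply, smul_eq_mul, FourTensor.congruence,
    FourTensor.block, Matrix.mul_apply, Matrix.transpose_apply, Matrix.of_apply, Finset.sum_mul]
  rw [Finset.sum_comm]
  simp only [mul_comm, mul_left_comm]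

/-- if `C` is strongly convex with constant `c₀ > 0`, `det M > 0`, and
`Σ ε_{ij}² ≤ L² Σ (εM)_{ij}²` for all `ε`, then the push-forward tensor `C̃` is strongly
convex with the constant `c₀ / (L² det M)`. -/
theorem pushForward_strong_convexity (N : ℕ) (hN : 1 ≤ N)
    (C : Fin N → Fin N → Fin N → Fin N → ℝ) (c₀ : ℝ) (hc₀ : 0 < c₀)
    (hconv : ∀ ε : Matrix (Fin N) (Fin N) ℝ,
      c₀ * ∑ i, ∑ j, (ε i j) ^ 2
        ≤ ∑ i, ∑ j, ∑ k, ∑ l, C i j k l * ε i j * ε k l)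
    (M : Matrix (Fin N) (Fin N) ℝ) (hM : 0 < M.det)
    (L : ℝ) (hL : 0 < L)
    (hLip : ∀ ε : Matrix (Fin N) (Fin N) ℝ,
      ∑ i, ∑ j, (ε i j) ^ 2 ≤ L ^ 2 * ∑ i, ∑ j, ((ε * M) i j) ^ 2) :
    ∀ ε : Matrix (Fin N) (Fin N) ℝ,
      (c₀ / (L ^ 2 * M.det)) * ∑ i, ∑ q, (ε i q) ^ 2
        ≤ ∑ i, ∑ q, ∑ k, ∑ p, pushForward C M i q k p * ε i q * ε k p := by
  have hlower (ε : Matrix (Fin N) (Fin N) ℝ) :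
      (L ^ 2)⁻¹ * ∑ i, ∑ q, ε i q ^ 2 ≤ ∑ i, ∑ j, (ε * M) i j ^ 2 :=
    (inv_mul_le_iff₀ (pow_pos hL 2)).2 (hLip ε)
  have hC : FourTensor.IsStronglyConvex C c₀ := hconv
  have hconst : c₀ / (L ^ 2 * M.det) = M.det⁻¹ * (c₀ * (L ^ 2)⁻¹) := by
    field_simp
  rw [hconst, pushForward_eq_smul_congruence]
  exact (hC.congruence hc₀.le hlower).smul (inv_nonneg.2 hM.le)
end

section
/- Let λ, μ ∈ ℝ and let t : (1,2) → ℝ be a function with |t(r)| ≤ B for all r ∈ (1,2) and some constant B. For r ∈ (1,2), let C(r) be the 2-dimensional elasticity tensor with residual stress whose Lamé parameters are λ, μ and whose residual stress matrix T(r) is symmetric with (1,1)-entry t(r), and let C̃(r) be the push-forward of C(r) by the Jacobian matrix M(r) = diag(1/2, r/(2(r−1))) of the singular cloaking transformation. Then C̃(r)_{1111} = ((r−1)/r)(λ + 2μ + t(r)), this quantity tends to 0 as r → 1⁺, and consequently there is no constant c₀ > 0 such that C̃(r) satisfies the strong convexity condition with constant c₀ for every r ∈ (1,2). -/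
/-- The Kronecker delta. -/
noncomputable def kron {N : ℕ} (i j : Fin N) : ℝ := if i = j then 1 else 0

/-- The elasticity tensor with residual stress:
`C_{ijkl} = λ δ_{ij} δ_{kl} + μ (δ_{ik} δ_{jl} + δ_{il} δ_{jk}) + t_{jl} δ_{ik}`. -/
noncomputable def resTensor {N : ℕ} (lam mu : ℝ) (T : Matrix (Fin N) (Fin N) ℝ) :
    Fin N → Fin N → Fin N → Fin N → ℝ :=
  fun i j k l =>
    lam * kron i j * kron k l + mu * (kron i k * kron j l + kron i l * kron j k)
      + T j l * kron i k

/-- The Jacobian `diag(1/2, r/(2(r−1)))` (in polar coordinates) of the singular cloaking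
transformation `F₀(x) = (1 + |x|/2) x/|x|` in dimension 2. -/
noncomputable def cloakJac (r : ℝ) : Matrix (Fin 2) (Fin 2) ℝ :=
  Matrix.diagonal ![1 / 2, r / (2 * (r - 1))]

/-!
The radial direction contributes `1/4` to the `1111` entry of the push-forward, while dividing by
`det M = r / (4 (r - 1))` multiplies it by a factor that vanishes at the cloak surface `r = 1`.
Testing strong convexity on the matrix unit `e₁₁` bounds the constant by that same entry.
-/

open Filter Set Topology

section Tensor

variable {N : ℕ}

/-- The strong convexity condition with constant `c₀` for a four-index tensor, tested on all real
matrices `ε`, symmetric or not. The positivity of `c₀` is left to the statements using it. -/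
def IsStronglyConvexTensor (c₀ : ℝ) (C : Fin N → Fin N → Fin N → Fin N → ℝ) : Prop :=
  ∀ ε : Matrix (Fin N) (Fin N) ℝ,
    c₀ * ∑ i, ∑ j, (ε i j) ^ 2 ≤ ∑ i, ∑ j, ∑ k, ∑ l, C i j k l * ε i j * ε k l

theorem IsStronglyConvexTensor.le_apply {c₀ : ℝ} {C : Fin N → Fin N → Fin N → Fin N → ℝ}
    (hC : IsStronglyConvexTensor c₀ C) (i j : Fin N) :
    c₀ ≤ C i j i j := by
  simpa [Matrix.single_apply, ite_and] using hC (Matrix.single i j 1)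

theorem not_exists_eventually_isStronglyConvexTensor {α : Type*} {l : Filter α} [l.NeBot]
    {C : α → Fin N → Fin N → Fin N → Fin N → ℝ} {i j : Fin N}
    (hC : Tendsto (fun a => C a i j i j) l (𝓝 0)) :
    ¬ ∃ c₀ > (0 : ℝ), ∀ᶠ a in l, IsStronglyConvexTensor c₀ (C a) := by
  rintro ⟨c₀, hc₀, hconvex⟩
  exact hc₀.not_ge (ge_of_tendsto hC (hconvex.mono fun a ha => ha.le_apply i j))

theorem pushForward_diagonal (C : Fin N → Fin N → Fin N → Fin N → ℝ) (d : Fin N → ℝ)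
    (i q k p : Fin N) :
    pushForward C (Matrix.diagonal d) i q k p = (∏ j, d j)⁻¹ * (C i q k p * d p * d q) := by
  simp [pushForward, Matrix.det_diagonal, Matrix.diagonal_apply]

theorem resTensor_apply_self (lam mu : ℝ) (T : Matrix (Fin N) (Fin N) ℝ) (i : Fin N) :
    resTensor lam mu T i i i i = lam + 2 * mu + T i i := by
  simp only [resTensor, kron, if_true]
  ring

end Tensor

theorem pushForward_cloakJac_apply_zero (C : Fin 2 → Fin 2 → Fin 2 → Fin 2 → ℝ) {r : ℝ}
    (hr : r ≠ 1) :
    pushForward C (cloakJac r) 0 0 0 0 = ((r - 1) / r) * C 0 0 0 0 := by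
  have hsub : r - 1 ≠ 0 := sub_ne_zero.2 hr
  rw [cloakJac, pushForward_diagonal, Fin.prod_univ_two]
  simp only [Matrix.cons_val_zero, Matrix.cons_val_one]
  field_simp

theorem tendsto_sub_one_div_mul_const_add {l : Filter ℝ} (hl : l ≤ 𝓝 1) {t : ℝ → ℝ}
    (ht : l.IsBoundedUnder (· ≤ ·) fun r => |t r|) (a : ℝ) :
    Tendsto (fun r => ((r - 1) / r) * (a + t r)) l (𝓝 0) := by
  have hfactor : Tendsto (fun r : ℝ => (r - 1) / r) l (𝓝 0) := by
    have hcont : ContinuousAt (fun r : ℝ => (r - 1) / r) 1 := by fun_prop (disch := norm_num)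
    simpa using hcont.tendsto.mono_left hl
  simpa [mul_add] using (hfactor.mul_const a).add (hfactor.zero_mul_isBoundedUnder_le ht)

theorem cloaking_tensor_degenerates_general (lam mu : ℝ) (t : ℝ → ℝ)
    (ht : (𝓝[>] 1).IsBoundedUnder (· ≤ ·) fun r => |t r|)
    (T : ℝ → Matrix (Fin 2) (Fin 2) ℝ) (hT11 : ∀ r, T r 0 0 = t r) :
    (∀ r > 1, pushForward (resTensor lam mu (T r)) (cloakJac r) 0 0 0 0
        = ((r - 1) / r) * (lam + 2 * mu + t r)) ∧
    Tendsto (fun r => pushForward (resTensor lam mu (T r)) (cloakJac r) 0 0 0 0)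
      (𝓝[>] 1) (𝓝 0) ∧
    ¬ ∃ c₀ > (0 : ℝ), ∀ᶠ r in 𝓝[>] 1,
        IsStronglyConvexTensor c₀ (pushForward (resTensor lam mu (T r)) (cloakJac r)) := by
  have hentry : ∀ r > 1, pushForward (resTensor lam mu (T r)) (cloakJac r) 0 0 0 0
      = ((r - 1) / r) * (lam + 2 * mu + t r) := fun r hr => by
    rw [pushForward_cloakJac_apply_zero _ hr.ne', resTensor_apply_self, hT11]
  have hlim : Tendsto (fun r => pushForward (resTensor lam mu (T r)) (cloakJac r) 0 0 0 0)
      (𝓝[>] 1) (𝓝 0) :=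
    (tendsto_sub_one_div_mul_const_add nhdsWithin_le_nhds ht (lam + 2 * mu)).congr'
      (eventually_mem_nhdsWithin.mono fun r hr => (hentry r hr).symm)
  exact ⟨hentry, hlim, not_exists_eventually_isStronglyConvexTensor hlim⟩

/-- with a bounded residual stress entry `t(r) = T(r)₁₁`, the transformed
tensor satisfies `C̃(r)₁₁₁₁ = ((r−1)/r)(λ + 2μ + t(r))`, this entry tends to `0` as
`r → 1⁺`, and there is no constant `c₀ > 0` for which `C̃(r)` satisfies the strong
convexity condition for every `r ∈ (1,2)`. -/
theorem cloaking_tensor_degenerates (lam mu B : ℝ) (t : ℝ → ℝ)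
    (hB : ∀ r ∈ Set.Ioo (1 : ℝ) 2, |t r| ≤ B)
    (T : ℝ → Matrix (Fin 2) (Fin 2) ℝ)
    (hTsymm : ∀ r, ∀ j l, T r j l = T r l j)
    (hT11 : ∀ r, T r 0 0 = t r) :
    (∀ r ∈ Set.Ioo (1 : ℝ) 2,
      pushForward (resTensor lam mu (T r)) (cloakJac r) 0 0 0 0
        = ((r - 1) / r) * (lam + 2 * mu + t r)) ∧
    Filter.Tendsto
      (fun r => pushForward (resTensor lam mu (T r)) (cloakJac r) 0 0 0 0)
      (nhdsWithin 1 (Set.Ioo (1 : ℝ) 2)) (nhds 0) ∧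
    ¬ ∃ c₀ > (0 : ℝ), ∀ r ∈ Set.Ioo (1 : ℝ) 2, ∀ ε : Matrix (Fin 2) (Fin 2) ℝ,
        c₀ * ∑ i, ∑ j, (ε i j) ^ 2
          ≤ ∑ i, ∑ j, ∑ k, ∑ l,
              pushForward (resTensor lam mu (T r)) (cloakJac r) i j k l
                * ε i j * ε k l := by
  have hnear : Ioo (1 : ℝ) 2 ∈ 𝓝[>] 1 := Ioo_mem_nhdsGT one_lt_two
  obtain ⟨hentry, hlim, hconvex⟩ := cloaking_tensor_degenerates_general lam mu t
    (isBoundedUnder_of_eventually_le (mem_of_superset hnear hB)) T hT11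
  exact ⟨fun r hr => hentry r hr.1, hlim.mono_left (nhdsWithin_mono 1 Ioo_subset_Ioi_self),
    fun ⟨c₀, hc₀, h⟩ => hconvex ⟨c₀, hc₀, mem_of_superset hnear h⟩⟩
end
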